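/- Let F : ℝ^d → ℝ^d be L-Lipschitz with L > 0 and have a weak Minty solution u* with parameter ρ > 0. Let (u_k, ū_k, a_k) be generated by the adaptive EG+ method with γ = 1/2, τ ∈ (0,1) and a₀ ≥ τ/L, and let a_∞ denote the limit of the nonincreasing, bounded-below sequence (a_k). If a_∞ > 2ρ, then there exists k₀ ∈ ℕ such that for all k > k₀: min_{k₀ ≤ i ≤ k} ‖F(u_i)‖² ≤ (1/(k − k₀))·(L/(τ·(a_∞/2 − ρ)))·‖ū_{k₀} − u*‖². -/

import Mathlib

open scoped RealInnerProductSpace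

/-- The decrements of `D` are at least `h` on `[k, x]`, and `D k` is less than twice the area
`(x - k) * h`. -/
structure IsWideRectangle (D : ℕ → ℝ) (k x : ℕ) (h : ℝ) : Prop where
  height_pos : 0 < h
  left_le : k ≤ x
  height_le : ∀ i, k ≤ i → i ≤ x → h ≤ D i - D (i + 1)
  lt_area : D k < 2 * ((x : ℝ) - k) * h

theorem IsWideRectangle.left_lt {D : ℕ → ℝ} (hD : ∀ k, 0 ≤ D k) {k x : ℕ} {h : ℝ}
    (hR : IsWideRectangle D k x h) : k < x := by
  rcases hR.left_le.lt_or_eq with hlt | rfl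
  · exact hlt
  · have h1 := hR.lt_area
    have h2 := hD k
    simp only [sub_self, mul_zero, zero_mul] at h1
    linarith

theorem mul_le_sub_of_forall_le_sub_succ {D : ℕ → ℝ} {h : ℝ} {m n : ℕ} (hmn : m ≤ n)
    (hD : ∀ i, m ≤ i → i < n → h ≤ D i - D (i + 1)) :
    ((n : ℝ) - m) * h ≤ D m - D n := by
  induction n, hmn using Nat.le_induction with
  | base => simp
  | succ n hmn ih =>
    have h1 := ih fun i hi hin => hD i hi (by omega)
    have h2 := hD n hmn (by omega)
    push_cast
    linarith

/-- The quantity that decreases along successive wide rectangles. -/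
noncomputable def rectanglePotential (D : ℕ → ℝ) (x : ℕ) (h : ℝ) : ℝ :=
  D (x + 1) / h - Real.log h / 2

/-- If `T`, `R` are the values of `D` at the left end of the new rectangle and just after the old
one, the potential does not increase from the rectangle of height `h` to that of height `h₂`. -/
theorem potential_le_of_area_bounds {T R R₂ h h₁ h₂ p r w : ℝ}
    (hh : 0 < h) (hh₁ : h ≤ h₁) (hh₂ : 0 < h₂) (hr : 0 ≤ r) (hw : 1 ≤ w) (hR : 0 ≤ R)
    (hT_lt : T < (2 * p + 1) * h₁) (hT_ge : 2 * (p + r) * h ≤ T)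
    (hT_lt₂ : T < 2 * (p + r + w) * h₂)
    (hTR : (p + 1) * h₁ + r * h ≤ T - R) (hRR : w * h₂ ≤ R - R₂) :
    R₂ / h₂ - Real.log h₂ / 2 ≤ R / h - Real.log h / 2 := by
  have hR₂ : R₂ / h₂ ≤ R / h₂ - w := by
    rw [div_le_iff₀ hh₂, sub_mul, div_mul_cancel₀ _ hh₂.ne']
    linarith
  rcases le_total h h₂ with hle | hle
  · have h1 : R / h₂ ≤ R / h := div_le_div_of_nonneg_left hR hh hle
    have h2 := Real.log_le_log hh hle
    linarith
  · have hlog : Real.log h - Real.log h₂ ≤ h / h₂ - 1 := by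
      rw [← Real.log_div hh.ne' hh₂.ne']
      exact Real.log_le_sub_one_of_pos (div_pos hh hh₂)
    have hRlt : R < (p + r + w) * h₂ - h / 2 - r * h := by linarith
    have hside : (p + r) * (h - h₂) ≤ w * h₂ := by linarith
    have hkey : R / h₂ - R / h + (h / h₂ - 1) / 2 ≤ w := by
      have heq : R / h₂ - R / h + (h / h₂ - 1) / 2 = (R + h / 2) * (h - h₂) / (h * h₂) := by
        field_simp
      rw [heq, div_le_iff₀ (mul_pos hh hh₂)]
      have h1 : (R + h / 2) * (h - h₂) ≤ ((p + r + w) * h₂ - r * h) * (h - h₂) :=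
        mul_le_mul_of_nonneg_right (by linarith) (by linarith)
      have h2 := mul_le_mul_of_nonneg_right hside hh₂.le
      have h3 : 0 ≤ r * h * (h - h₂) := mul_nonneg (mul_nonneg hr hh.le) (by linarith)
      linarith
    linarith

theorem IsWideRectangle.exists_next {D : ℕ → ℝ} (hD : ∀ k, 0 ≤ D k)
    (hex : ∀ k, ∃ x h, IsWideRectangle D k x h) {k x : ℕ} {h : ℝ}
    (hR : IsWideRectangle D k x h) :
    ∃ t x₂ h₂, IsWideRectangle D t x₂ h₂ ∧ x < x₂ ∧
      rectanglePotential D x₂ h₂ ≤ rectanglePotential D x h := by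
  classical
  let P : ℕ → Prop := fun m => k ≤ m ∧ ∃ x' ≤ x, ∃ h', h ≤ h' ∧ IsWideRectangle D m x' h'
  have hPk : P k := ⟨le_rfl, x, le_rfl, h, le_rfl, hR⟩
  obtain ⟨hkm, x₁, hx₁, h₁, hh₁, hR₁⟩ : P (Nat.findGreatest P x) :=
    Nat.findGreatest_spec hR.left_le hPk
  set m := Nat.findGreatest P x
  have hmx₁ : m < x₁ := hR₁.left_lt hD
  have hnot : ¬ P (m + 1) := Nat.findGreatest_is_greatest (Nat.lt_succ_self m) (by omega)
  have hT_ge : 2 * ((x : ℝ) - (m + 1 : ℕ)) * h ≤ D (m + 1) := by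
    by_contra! hlt
    exact hnot ⟨by omega, x, le_rfl, h, le_rfl, hR.height_pos, by omega,
      fun i hi hix => hR.height_le i (by omega) hix, hlt⟩
  obtain ⟨x₂, h₂, hR₂⟩ := hex (m + 1)
  have hx₂ : x < x₂ := by
    by_contra! hle
    have hh₂ : h₂ < h := by
      by_contra! hh₂
      exact hnot ⟨by omega, x₂, hle, h₂, hh₂, hR₂⟩
    have hlt := hR₂.lt_area
    have h1 : (((m + 1 : ℕ) : ℝ)) ≤ x₂ := by exact_mod_cast hR₂.left_le
    have h2 : (x₂ : ℝ) ≤ x := by exact_mod_cast hle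
    have h3 : ((x₂ : ℝ) - (m + 1 : ℕ)) * h₂ ≤ ((x : ℝ) - (m + 1 : ℕ)) * h :=
      mul_le_mul (by linarith) hh₂.le hR₂.height_pos.le (by linarith)
    linarith
  refine ⟨m + 1, x₂, h₂, hR₂, hx₂, ?_⟩
  have hfirst := hR₁.height_le m le_rfl hR₁.left_le
  have harea₁ := hR₁.lt_area
  have hsum₁ := mul_le_sub_of_forall_le_sub_succ (D := D) (h := h₁) (m := m + 1) (n := x₁ + 1)
    (by omega) fun i hi hin => hR₁.height_le i (by omega) (by omega)
  have hsum := mul_le_sub_of_forall_le_sub_succ (D := D) (h := h) (m := x₁ + 1) (n := x + 1)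
    (by omega) fun i hi hin => hR.height_le i (by omega) (by omega)
  have hsum₂ := mul_le_sub_of_forall_le_sub_succ (D := D) (h := h₂) (m := x + 1) (n := x₂ + 1)
    (by omega) fun i hi hin => hR₂.height_le i (by omega) (by omega)
  have harea₂ := hR₂.lt_area
  have hw : (x : ℝ) + 1 ≤ x₂ := by exact_mod_cast hx₂
  have hr : (x₁ : ℝ) ≤ x := by exact_mod_cast hx₁
  push_cast at *
  exact potential_le_of_area_bounds (T := D (m + 1)) (p := (x₁ : ℝ) - (m + 1)) (r := (x : ℝ) - x₁)
    (w := (x₂ : ℝ) - x) (h₁ := h₁) hR.height_pos hh₁ hR₂.height_pos (by linarith)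
    (by linarith) (hD _) (by linarith) (by linarith) (by linarith) (by linarith) (by linarith)

/-- A nonincreasing nonnegative sequence has an index from which on every run of `n + 1`
decrements bounded below by `h` satisfies `2 * n * h ≤ D k`. -/
theorem exists_forall_two_mul_le_of_antitone {D : ℕ → ℝ} (hD : ∀ k, 0 ≤ D k) (hanti : Antitone D) :
    ∃ k, ∀ (x : ℕ) (h : ℝ), k ≤ x → (∀ i, k ≤ i → i ≤ x → h ≤ D i - D (i + 1)) →
      2 * ((x : ℝ) - k) * h ≤ D k := by
  by_contra! hcon
  have hex : ∀ k, ∃ x h, IsWideRectangle D k x h := by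
    intro k
    obtain ⟨x, h, hkx, hh, hlt⟩ := hcon k
    refine ⟨x, h, ?_, hkx, hh, hlt⟩
    have h1 : (k : ℝ) ≤ x := by exact_mod_cast hkx
    exact pos_of_mul_pos_right ((hD k).trans_lt hlt) (by linarith)
  obtain ⟨x₀, h₀, hR₀⟩ := hex 0
  have hall : ∀ n : ℕ, ∃ k x h, IsWideRectangle D k x h ∧ n ≤ x ∧
      rectanglePotential D x h ≤ rectanglePotential D x₀ h₀ := by
    intro n
    induction n with
    | zero => exact ⟨0, x₀, h₀, hR₀, Nat.zero_le _, le_rfl⟩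
    | succ n ih =>
      obtain ⟨k, x, h, hR, hnx, hpot⟩ := ih
      obtain ⟨t, x₂, h₂, hR₂, hx₂, hpot₂⟩ := hR.exists_next hD hex
      exact ⟨t, x₂, h₂, hR₂, by omega, hpot₂.trans hpot⟩
  have hconv := tendsto_atTop_ciInf hanti ⟨0, by rintro _ ⟨k, rfl⟩; exact hD k⟩
  have hdec : Filter.Tendsto (fun i => D i - D (i + 1)) Filter.atTop (nhds 0) := by
    simpa using hconv.sub (hconv.comp (Filter.tendsto_add_atTop_nat 1))
  obtain ⟨n, hn⟩ := Filter.eventually_atTop.1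
    (hdec.eventually_lt_const (Real.exp_pos (-2 * rectanglePotential D x₀ h₀)))
  obtain ⟨k, x, h, hR, hnx, hpot⟩ := hall n
  have hlt := (hR.height_le x hR.left_le le_rfl).trans_lt (hn x hnx)
  have hlog := (Real.log_lt_iff_lt_exp hR.height_pos).2 hlt
  have hnonneg : 0 ≤ D (x + 1) / h := div_nonneg (hD _) hR.height_pos.le
  rw [rectanglePotential] at hpot
  linarith

/-- One step of the extragradient method with halved update step decreases the squared distance to
a weak Minty solution. -/
theorem norm_sq_extragradient_step_le {E : Type*} [NormedAddCommGroup E] [InnerProductSpace ℝ E]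
    {x y z f g : E} {α ρ : ℝ} (hα : 0 ≤ α) (hy : y = x - α • g)
    (hweak : -(ρ / 2) * ‖f‖ ^ 2 ≤ ⟪f, y - z⟫) (hfg : ‖f - g‖ ≤ ‖g‖) :
    ‖x - (α * (1 / 2 : ℝ)) • f - z‖ ^ 2 ≤
      ‖x - z‖ ^ 2 - α / 2 * (α / 2 - ρ) * ‖f‖ ^ 2 := by
  have hinner : ‖f‖ ^ 2 / 2 ≤ ⟪f, g⟫ := by
    have h1 := norm_sub_sq_real f g
    have h2 := pow_le_pow_left₀ (norm_nonneg _) hfg 2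
    linarith
  have hxz : x - z = (y - z) + α • g := by
    rw [hy]
    abel
  have hfx : ⟪f, x - z⟫ = ⟪f, y - z⟫ + α * ⟪f, g⟫ := by
    rw [hxz, inner_add_right, real_inner_smul_right]
  have hexp : ‖x - (α * (1 / 2 : ℝ)) • f - z‖ ^ 2 =
      ‖x - z‖ ^ 2 - α * ⟪f, x - z⟫ + α ^ 2 / 4 * ‖f‖ ^ 2 := by
    rw [sub_right_comm, norm_sub_sq_real, real_inner_smul_right, norm_smul, mul_pow,
      Real.norm_eq_abs, sq_abs, real_inner_comm]
    ring
  rw [hexp, hfx]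
  nlinarith [mul_le_mul_of_nonneg_left hweak hα, mul_le_mul_of_nonneg_left hinner (sq_nonneg α)]

theorem adaptive_eg_plus_convergence (d : ℕ)
    (F : EuclideanSpace ℝ (Fin d) → EuclideanSpace ℝ (Fin d))
    (L ρ τ ainf : ℝ) (ustar : EuclideanSpace ℝ (Fin d))
    (hL : 0 < L) (hLip : ∀ u v, ‖F u - F v‖ ≤ L * ‖u - v‖)
    (hρ : 0 < ρ)
    (hweak : ∀ u, ⟪F u, u - ustar⟫ ≥ -(ρ / 2) * ‖F u‖ ^ 2)
    (hτ0 : 0 < τ) (hτ1 : τ < 1)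
    (u ubar : ℕ → EuclideanSpace ℝ (Fin d)) (a : ℕ → ℝ)
    (ha0 : τ / L ≤ a 0) (ha0pos : 0 < a 0)
    (hstep_eq : ∀ k : ℕ, F (u k) = F (ubar k) → a (k + 1) = a k)
    (hstep_ne : ∀ k : ℕ, F (u k) ≠ F (ubar k) →
      a (k + 1) = min (a k) (τ * ‖u k - ubar k‖ / ‖F (u k) - F (ubar k)‖))
    (hu : ∀ k : ℕ, u k = ubar k - a k • F (ubar k))
    (hubar : ∀ k : ℕ, ubar (k + 1) = ubar k - (a k * (1 / 2 : ℝ)) • F (u k))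
    (hlim : Filter.Tendsto a Filter.atTop (nhds ainf))
    (hainf : ainf > 2 * ρ) :
    ∃ k₀ : ℕ, ∀ (k : ℕ) (hk : k > k₀),
      (Finset.Icc k₀ k).inf' (Finset.nonempty_Icc.mpr (le_of_lt hk))
          (fun i => ‖F (u i)‖ ^ 2)
        ≤ (1 / ((k : ℝ) - (k₀ : ℝ))) * (L / (τ * (ainf / 2 - ρ)))
            * ‖ubar k₀ - ustar‖ ^ 2 := by
  have hanti : Antitone a := antitone_nat_of_succ_le fun k => by
    by_cases h : F (u k) = F (ubar k)
    · exact (hstep_eq k h).le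
    · exact (hstep_ne k h).trans_le (min_le_left _ _)
  have hlower : ∀ k, τ / L ≤ a k := by
    intro k
    induction k with
    | zero => exact ha0
    | succ k ih =>
      by_cases h : F (u k) = F (ubar k)
      · rwa [hstep_eq k h]
      · rw [hstep_ne k h]
        refine le_min ih ?_
        rw [div_le_div_iff₀ hL (norm_pos_iff.2 (sub_ne_zero.2 h))]
        nlinarith [mul_le_mul_of_nonneg_left (hLip (u k) (ubar k)) hτ0.le]
  have hτL : 0 < τ / L := div_pos hτ0 hL
  have hpos : ∀ k, 0 < a k := fun k => hτL.trans_le (hlower k)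
  have hge : ∀ k, ainf ≤ a k := fun k => hanti.le_of_tendsto hlim k
  have hgap : 0 < ainf / 2 - ρ := by linarith
  obtain ⟨K, hK⟩ : ∃ K, ∀ k ≥ K, τ * a k < a (k + 1) := by
    have hlt : τ * ainf < ainf := by nlinarith
    exact Filter.eventually_atTop.1 ((hlim.const_mul τ).eventually_lt
      (hlim.comp (Filter.tendsto_add_atTop_nat 1)) hlt)
  have hdiff : ∀ k ≥ K, ‖F (u k) - F (ubar k)‖ ≤ ‖F (ubar k)‖ := by
    intro k hk
    by_cases h : F (u k) = F (ubar k)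
    · simp [h]
    · have hle := (hstep_ne k h).trans_le (min_le_right _ _)
      rw [le_div_iff₀ (norm_pos_iff.2 (sub_ne_zero.2 h))] at hle
      have hnorm : ‖u k - ubar k‖ = a k * ‖F (ubar k)‖ := by
        rw [hu k, sub_sub_cancel_left, norm_neg, norm_smul, Real.norm_of_nonneg (hpos k).le]
      rw [hnorm] at hle
      refine le_of_mul_le_mul_left ?_ (hpos (k + 1))
      nlinarith [mul_le_mul_of_nonneg_right (hK k hk).le (norm_nonneg (F (ubar k)))]
  set c : ℝ := τ / L / 2 * (ainf / 2 - ρ) with hc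
  have hcpos : 0 < c := by positivity
  have hdescent : ∀ k ≥ K,
      c * ‖F (u k)‖ ^ 2 ≤ ‖ubar k - ustar‖ ^ 2 - ‖ubar (k + 1) - ustar‖ ^ 2 := by
    intro k hk
    have hstep := norm_sq_extragradient_step_le (hpos k).le (hu k) (hweak (u k)) (hdiff k hk)
    rw [← hubar k] at hstep
    have hcoef : c ≤ a k / 2 * (a k / 2 - ρ) :=
      mul_le_mul (by linarith [hlower k]) (by linarith [hge k]) hgap.le (by linarith [hpos k])
    linarith [mul_le_mul_of_nonneg_right hcoef (sq_nonneg ‖F (u k)‖)]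
  obtain ⟨k₁, hk₁⟩ := exists_forall_two_mul_le_of_antitone
    (D := fun k => ‖ubar (K + k) - ustar‖ ^ 2) (fun k => sq_nonneg _)
    (antitone_nat_of_succ_le fun k => by
      have h1 := hdescent (K + k) (by omega)
      have h2 : 0 ≤ c * ‖F (u (K + k))‖ ^ 2 := by positivity
      rw [← add_assoc]
      linarith)
  refine ⟨K + k₁, fun k hk => ?_⟩
  set M := (Finset.Icc (K + k₁) k).inf' (Finset.nonempty_Icc.mpr (le_of_lt hk))
    (fun i => ‖F (u i)‖ ^ 2)
  obtain ⟨x, rfl⟩ : ∃ x, k = K + x := ⟨k - K, by omega⟩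
  have hmain := hk₁ x (c * M) (by omega) fun i hi hix =>
    (mul_le_mul_of_nonneg_left
      (Finset.inf'_le (fun i => ‖F (u i)‖ ^ 2) (Finset.mem_Icc.2 ⟨by omega, by omega⟩))
      hcpos.le).trans (hdescent (K + i) (by omega))
  have hx : (0 : ℝ) < (x : ℝ) - k₁ := by
    rw [sub_pos]
    exact_mod_cast (by omega : k₁ < x)
  have hrhs : (1 / (((K + x : ℕ) : ℝ) - ((K + k₁ : ℕ) : ℝ))) * (L / (τ * (ainf / 2 - ρ)))
      * ‖ubar (K + k₁) - ustar‖ ^ 2 =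
      ‖ubar (K + k₁) - ustar‖ ^ 2 / (2 * ((x : ℝ) - k₁) * c) := by
    push_cast
    rw [add_sub_add_left_eq_sub, hc]
    field_simp
  rw [hrhs, le_div_iff₀ (by positivity)]
  linarith
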